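/- Supporting computation for the arc fiber of xy = z² − w⁵: Let k be a field of characteristic zero, and let B = k[w₁, x₁, x₂, x₃, x₄, y₁, y₂, y₃, y₄, z₁, z₂, z₃, z₄] be a polynomial ring in 13 variables (MvPolynomial over Fin 13 with the variables so named). Consider the ideal generated by h₂ = x₁y₁ − z₁², h₃ = x₁y₂ + x₂y₁ − 2z₁z₂, h₄ = x₁y₃ + x₂y₂ + x₃y₁ − 2z₁z₃ − z₂², and h₅ = x₁y₄ + x₂y₃ + x₃y₂ + x₄y₁ − 2z₁z₄ − 2z₂z₃ + w₁⁵. Then the localization of B/(h₂, h₃, h₄, h₅) at the multiplicative submonoid generated by the images of w₁, x₂ and x₁ is an integral domain of Krull dimension 9. -/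

import Mathlib

open MvPolynomial

namespace ArcAux

/-- Substitute `1` for the first `i` variables. -/
noncomputable def sub1 (k : Type*) [Field k] (i : ℕ) :
    MvPolynomial (Fin 9) k →ₐ[k] MvPolynomial (Fin 9) k :=
  aeval (fun j : Fin 9 => if j.val < i then 1 else X j)

lemma sub1_comp (k : Type*) [Field k] {i j : ℕ} (h : i ≤ j) (a : MvPolynomial (Fin 9) k) :
    sub1 k j (sub1 k i a) = sub1 k j a := by
  have : (sub1 k j).comp (sub1 k i) = sub1 k j := by
    apply MvPolynomial.algHom_ext
    intro l
    simp only [sub1, AlgHom.comp_apply, aeval_X]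
    split_ifs with h1 h2 h2
    · simp
    · omega
    · simp [h2]
    · simp [h2]
  exact DFunLike.congr_fun this a

lemma dim_away (k : Type*) [Field k] (f : MvPolynomial (Fin 9) k)
    (hf : sub1 k 9 f ≠ 0) (A : Type*) [CommRing A] [Algebra (MvPolynomial (Fin 9) k) A]
    [IsLocalization.Away f A] : ringKrullDim A = 9 := by
  apply le_antisymm
  · have h1 : ringKrullDim A ≤ ringKrullDim (MvPolynomial (Fin 9) k) :=
      Order.krullDim_le_of_strictMono
        (PrimeSpectrum.comap (algebraMap (MvPolynomial (Fin 9) k) A))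
        (Monotone.strictMono_of_injective (fun _ _ h => Ideal.comap_mono h)
          (PrimeSpectrum.localization_comap_injective A (Submonoid.powers f)))
    refine h1.trans (le_of_eq ?_)
    simp
  · have hu : ∀ i : Fin 10, IsUnit
        (((algebraMap (MvPolynomial (Fin 9) k) (FractionRing (MvPolynomial (Fin 9) k))).comp
          (sub1 k i.val).toRingHom) f) := by
      intro i
      rw [isUnit_iff_ne_zero]
      intro h
      apply hf
      have h2 : sub1 k i.val f = 0 := by
        apply IsFractionRing.injective (MvPolynomial (Fin 9) k)
          (FractionRing (MvPolynomial (Fin 9) k))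
        simpa using h
      rw [← sub1_comp k (show i.val ≤ 9 by omega), h2, map_zero]
    let φ : Fin 10 → A →+* FractionRing (MvPolynomial (Fin 9) k) := fun i =>
      IsLocalization.Away.lift f (hu i)
    have hφ : ∀ i a, φ i (algebraMap _ A a) = 0 ↔ sub1 k i.val a = 0 := by
      intro i a
      simp only [φ, IsLocalization.Away.lift_eq]
      simp
    let s : LTSeries (PrimeSpectrum A) := LTSeries.mk 9
      (fun i => ⟨RingHom.ker (φ i), RingHom.ker_isPrime _⟩) (by
        rw [Fin.strictMono_iff_lt_succ]
        intro i
        rw [← PrimeSpectrum.asIdeal_lt_asIdeal]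
        apply lt_of_le_of_ne
        · intro x hx
          obtain ⟨n, a, h⟩ := IsLocalization.Away.surj f x
          simp only [RingHom.mem_ker] at hx ⊢
          have h3 : φ i.castSucc (algebraMap _ A a) = 0 := by rw [← h, map_mul, hx, zero_mul]
          rw [hφ] at h3
          have h4 : φ i.succ (algebraMap _ A a) = 0 := by
            rw [hφ, ← sub1_comp k (show i.castSucc.val ≤ i.succ.val by simp), h3, map_zero]
          rw [← h, map_mul, mul_eq_zero] at h4
          refine h4.resolve_right ?_
          exact (((IsLocalization.Away.algebraMap_isUnit f).pow n).map (φ i.succ)).ne_zero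
        · intro h
          have h5 : algebraMap _ A ((X i : MvPolynomial (Fin 9) k) - 1) ∈ RingHom.ker (φ i.succ) := by
            rw [RingHom.mem_ker, hφ]
            simp [sub1]
          simp only at h
          rw [← h, RingHom.mem_ker, hφ] at h5
          have h6 := congrArg (MvPolynomial.eval (fun _ => (0:k))) h5
          simp [sub1] at h6)
    exact Order.LTSeries.length_le_krullDim s

lemma exists_inv {R : Type*} [CommRing R] {a : R} (h : IsUnit a) : ∃ u, a * u = 1 :=
  h.exists_right_inv

set_option maxHeartbeats 2000000 in
lemma core (k : Type*) [Field k] [CharZero k]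
    (J : Ideal (MvPolynomial (Fin 13) k))
    (hJ : J = Ideal.span
      {X 1 * X 5 - X 9 ^ 2,
       X 1 * X 6 + X 2 * X 5 - 2 * X 9 * X 10,
       X 1 * X 7 + X 2 * X 6 + X 3 * X 5 - 2 * X 9 * X 11 - X 10 ^ 2,
       X 1 * X 8 + X 2 * X 7 + X 3 * X 6 + X 4 * X 5
         - 2 * X 9 * X 12 - 2 * X 10 * X 11 + X 0 ^ 5})
    (S : Submonoid (MvPolynomial (Fin 13) k ⧸ J))
    (hS : S = Submonoid.closure
      {Ideal.Quotient.mk J (X 0), Ideal.Quotient.mk J (X 2), Ideal.Quotient.mk J (X 1)})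
    (f : MvPolynomial (Fin 9) k) (hfd : f = X 0 * X 1 * X 2)
    (A : Type*) [CommRing A] [Algebra (MvPolynomial (Fin 9) k) A] [IsLocalization.Away f A]
    (L : Type*) [CommRing L] [Algebra (MvPolynomial (Fin 13) k ⧸ J) L] [IsLocalization S L] :
    IsDomain L ∧ ringKrullDim L = 9 := by
  have hf : sub1 k 9 f ≠ 0 := by simp [hfd, sub1]
  have hf0 : f ≠ 0 := fun h => hf (by rw [h, map_zero])
  have hfu : IsUnit (algebraMap _ A f) := IsLocalization.Away.algebraMap_isUnit f
  have hu0 : IsUnit (algebraMap (MvPolynomial (Fin 9) k) A (X 0)) := isUnit_of_dvd_unit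
    (map_dvd _ (show X 0 ∣ f from ⟨X 1 * X 2, by simp only [hfd]; ring⟩)) hfu
  have hu1 : IsUnit (algebraMap (MvPolynomial (Fin 9) k) A (X 1)) := isUnit_of_dvd_unit
    (map_dvd _ (show X 1 ∣ f from ⟨X 0 * X 2, by simp only [hfd]; ring⟩)) hfu
  have hu2 : IsUnit (algebraMap (MvPolynomial (Fin 9) k) A (X 2)) := isUnit_of_dvd_unit
    (map_dvd _ (show X 2 ∣ f from ⟨X 0 * X 1, by simp only [hfd]; ring⟩)) hfu
  obtain ⟨u, hu⟩ := exists_inv hu1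
  let g : Fin 9 → A := fun i => algebraMap (MvPolynomial (Fin 9) k) A (X i)
  change g 1 * u = 1 at hu
  let y1 : A := u * g 5 ^ 2
  let y2 : A := u * (2 * g 5 * g 6 - g 2 * y1)
  let y3 : A := u * (2 * g 5 * g 7 + g 6 ^ 2 - g 2 * y2 - g 3 * y1)
  let y4 : A := u * (2 * g 5 * g 8 + 2 * g 6 * g 7 - g 0 ^ 5 - g 2 * y3 - g 3 * y2 - g 4 * y1)
  have r1 : g 1 * y1 = g 5 ^ 2 := by
    simp only [y1]; rw [← mul_assoc, hu, one_mul]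
  have r2 : g 1 * y2 = 2 * g 5 * g 6 - g 2 * y1 := by
    simp only [y2]; rw [← mul_assoc, hu, one_mul]
  have r3 : g 1 * y3 = 2 * g 5 * g 7 + g 6 ^ 2 - g 2 * y2 - g 3 * y1 := by
    simp only [y3]; rw [← mul_assoc, hu, one_mul]
  have r4 : g 1 * y4 =
      2 * g 5 * g 8 + 2 * g 6 * g 7 - g 0 ^ 5 - g 2 * y3 - g 3 * y2 - g 4 * y1 := by
    simp only [y4]; rw [← mul_assoc, hu, one_mul]
  clear_value y1 y2 y3 y4
  let v : Fin 13 → A := ![g 0, g 1, g 2, g 3, g 4, y1, y2, y3, y4, g 5, g 6, g 7, g 8]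
  let α0 : MvPolynomial (Fin 13) k →+* A :=
    eval₂Hom ((algebraMap (MvPolynomial (Fin 9) k) A).comp C) v
  have hα0 : ∀ i, α0 (X i) = v i := fun i => eval₂Hom_X' _ _ _
  have hJ0 : ∀ a ∈ J, α0 a = 0 := by
    intro a ha
    have : J ≤ RingHom.ker α0 := by
      rw [hJ, Ideal.span_le]
      rintro x (rfl | rfl | rfl | rfl) <;>
        simp only [SetLike.mem_coe, RingHom.mem_ker, map_add, map_sub, map_mul, map_pow, hα0,
          map_ofNat]
      · change g 1 * y1 - g 5 ^ 2 = 0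
        linear_combination r1
      · change g 1 * y2 + g 2 * y1 - 2 * g 5 * g 6 = 0
        linear_combination r2
      · change g 1 * y3 + g 2 * y2 + g 3 * y1 - 2 * g 5 * g 7 - g 6 ^ 2 = 0
        linear_combination r3
      · change g 1 * y4 + g 2 * y3 + g 3 * y2 + g 4 * y1 - 2 * g 5 * g 8 - 2 * g 6 * g 7
          + g 0 ^ 5 = 0
        linear_combination r4
    exact this ha
  let α1 : (MvPolynomial (Fin 13) k ⧸ J) →+* A := Ideal.Quotient.lift J α0 hJ0
  have hα1 : ∀ a, α1 (Ideal.Quotient.mk J a) = α0 a := fun a => Ideal.Quotient.lift_mk _ _ _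
  have hSu : ∀ s : S, IsUnit (α1 s) := by
    rintro ⟨s, hs⟩
    have : S ≤ (IsUnit.submonoid A).comap α1 := by
      rw [hS, Submonoid.closure_le]
      rintro x (rfl | rfl | rfl) <;>
        simp only [SetLike.mem_coe, Submonoid.mem_comap, hα1, hα0, IsUnit.mem_submonoid_iff]
      · exact hu0
      · exact hu2
      · exact hu1
    exact this hs
  let α : L →+* A := IsLocalization.lift hSu
  have hα : ∀ a, α (algebraMap _ L a) = α1 a := fun a => IsLocalization.lift_eq _ _
  let γ : MvPolynomial (Fin 13) k →+* L := (algebraMap _ L).comp (Ideal.Quotient.mk J)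
  have hαγ : ∀ a, α (γ a) = α0 a := fun a => by
    simp only [γ, RingHom.comp_apply, hα, hα1]
  have hγJ : ∀ a ∈ J, γ a = 0 := fun a ha => by
    simp only [γ, RingHom.comp_apply, Ideal.Quotient.eq_zero_iff_mem.2 ha, map_zero]
  let ι : Fin 9 → Fin 13 := ![0, 1, 2, 3, 4, 9, 10, 11, 12]
  let β0 : MvPolynomial (Fin 9) k →+* L := γ.comp (rename ι).toRingHom
  have hβ0 : ∀ i, β0 (X i) = γ (X (ι i)) := fun i => by
    simp [β0]
  have hSγ : ∀ i, Ideal.Quotient.mk J (X i) ∈ S → IsUnit (γ (X i)) := fun i hi =>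
    IsLocalization.map_units L (⟨_, hi⟩ : S)
  have hγ0 : IsUnit (γ (X 0)) := hSγ 0 (hS ▸ Submonoid.subset_closure (by simp))
  have hγ1 : IsUnit (γ (X 1)) := hSγ 1 (hS ▸ Submonoid.subset_closure (by simp))
  have hγ2 : IsUnit (γ (X 2)) := hSγ 2 (hS ▸ Submonoid.subset_closure (by simp))
  have hβf : IsUnit (β0 f) := by
    simp only [hfd, map_mul, hβ0]
    exact (hγ0.mul hγ1).mul hγ2
  let β : A →+* L := IsLocalization.Away.lift f hβf
  have hβ : ∀ a, β (algebraMap _ A a) = β0 a := fun a => IsLocalization.Away.lift_eq _ _ _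
  have hβg : ∀ i, β (g i) = γ (X (ι i)) := fun i => by rw [← hβ0, ← hβ]
  -- relations in L
  have mem : ∀ p ∈ ({X 1 * X 5 - X 9 ^ 2,
       X 1 * X 6 + X 2 * X 5 - 2 * X 9 * X 10,
       X 1 * X 7 + X 2 * X 6 + X 3 * X 5 - 2 * X 9 * X 11 - X 10 ^ 2,
       X 1 * X 8 + X 2 * X 7 + X 3 * X 6 + X 4 * X 5
         - 2 * X 9 * X 12 - 2 * X 10 * X 11 + X 0 ^ 5} : Set (MvPolynomial (Fin 13) k)),
      γ p = 0 := fun p hp => hγJ p (hJ ▸ Ideal.subset_span hp)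
  have s1 := mem _ (Or.inl rfl)
  have s2 := mem _ (Or.inr (Or.inl rfl))
  have s3 := mem _ (Or.inr (Or.inr (Or.inl rfl)))
  have s4 := mem _ (Or.inr (Or.inr (Or.inr rfl)))
  simp only [map_add, map_sub, map_mul, map_pow, map_ofNat] at s1 s2 s3 s4
  have t1 := congrArg β r1
  have t2 := congrArg β r2
  have t3 := congrArg β r3
  have t4 := congrArg β r4
  simp only [map_add, map_sub, map_mul, map_pow, map_ofNat, hβg] at t1 t2 t3 t4
  simp only [show ι 0 = 0 from rfl, show ι 1 = 1 from rfl, show ι 2 = 2 from rfl,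
    show ι 3 = 3 from rfl, show ι 4 = 4 from rfl, show ι 5 = 9 from rfl, show ι 6 = 10 from rfl,
    show ι 7 = 11 from rfl, show ι 8 = 12 from rfl] at t1 t2 t3 t4
  have q1 : β y1 = γ (X 5) := hγ1.mul_left_cancel (by linear_combination t1 - s1)
  rw [q1] at t2 t3 t4
  have q2 : β y2 = γ (X 6) := hγ1.mul_left_cancel (by linear_combination t2 - s2)
  rw [q2] at t3 t4
  have q3 : β y3 = γ (X 7) := hγ1.mul_left_cancel (by linear_combination t3 - s3)
  rw [q3] at t4
  have q4 : β y4 = γ (X 8) := hγ1.mul_left_cancel (by linear_combination t4 - s4)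
  have c1 : α.comp β = RingHom.id A := by
    apply IsLocalization.ringHom_ext (Submonoid.powers f)
    apply MvPolynomial.ringHom_ext
    · intro r
      simp only [RingHom.comp_apply, hβ, β0, RingHom.id_apply]
      simp only [AlgHom.toRingHom_eq_coe, RingHom.coe_coe, rename_C, hαγ]
      simp only [α0, eval₂Hom_C, RingHom.comp_apply]
    · intro i
      simp only [RingHom.comp_apply, hβ, hβ0, RingHom.id_apply, hαγ, hα0]
      fin_cases i <;> rfl
  have c2 : β.comp α = RingHom.id L := by
    apply IsLocalization.ringHom_ext S
    apply Ideal.Quotient.ringHom_ext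
    apply MvPolynomial.ringHom_ext
    · intro r
      simp only [RingHom.comp_apply, RingHom.id_apply, hα, hα1]
      have : α0 (C r) = algebraMap (MvPolynomial (Fin 9) k) A (C r) := by
        simp only [α0, eval₂Hom_C, RingHom.comp_apply]
      rw [this, hβ]
      simp [β0, γ]
    · intro i
      simp only [RingHom.comp_apply, RingHom.id_apply, hα, hα1, hα0]
      change β (v i) = γ (X i)
      fin_cases i
      · exact hβg 0
      · exact hβg 1
      · exact hβg 2
      · exact hβg 3
      · exact hβg 4
      · exact q1
      · exact q2
      · exact q3
      · exact q4
      · exact hβg 5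
      · exact hβg 6
      · exact hβg 7
      · exact hβg 8
  let e : L ≃+* A := RingEquiv.ofRingHom α β c1 c2
  have hA : IsDomain A := IsLocalization.Away.isDomain (S := A) hf0
  exact ⟨e.toMulEquiv.isDomain A, (ringKrullDim_eq_of_ringEquiv e).trans (dim_away k f hf A)⟩

end ArcAux

theorem arc_fiber_truncation_domain_dim_nine (k : Type*) [Field k] [CharZero k]
    (J : Ideal (MvPolynomial (Fin 13) k))
    (hJ : J = Ideal.span
      {X 1 * X 5 - X 9 ^ 2,
       X 1 * X 6 + X 2 * X 5 - 2 * X 9 * X 10,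
       X 1 * X 7 + X 2 * X 6 + X 3 * X 5 - 2 * X 9 * X 11 - X 10 ^ 2,
       X 1 * X 8 + X 2 * X 7 + X 3 * X 6 + X 4 * X 5
         - 2 * X 9 * X 12 - 2 * X 10 * X 11 + X 0 ^ 5})
    (S : Submonoid (MvPolynomial (Fin 13) k ⧸ J))
    (hS : S = Submonoid.closure
      {Ideal.Quotient.mk J (X 0), Ideal.Quotient.mk J (X 2), Ideal.Quotient.mk J (X 1)}) :
    IsDomain (Localization S) ∧ ringKrullDim (Localization S) = 9 := by
  exact ArcAux.core k J hJ S hS _ rfl (Localization.Away (X 0 * X 1 * X 2 : MvPolynomial (Fin 9) k)) (Localization S)
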